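/- arXiv:1606.02845 — 2 statements merged into one kernel-verified Lean document; each statement's English description precedes it below -/
import Mathlib

section
/- ∫₀¹ (1/(1+x)) · ( ∫₀ˣ log(y)/(y−1) dy ) dx = ζ(3) − (π²/12)·log(2), where ζ(3) = Σ_{k=1}^{∞} 1/k³. -/
open MeasureTheory Real

lemma aux_cont_xlog2 : ContinuousOn (fun x : ℝ => x * Real.log x ^ 2) (Set.Icc 0 1) := by
  have h : Continuous fun x : ℝ => 4 * (√x * Real.log √x) ^ 2 := by
    have := continuous_mul_log.comp Real.continuous_sqrt
    exact (this.pow 2).const_mul 4 |>.congr (fun x => by simp)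
  refine h.continuousOn.congr ?_
  intro x hx
  have : √x ^ 2 = x := Real.sq_sqrt hx.1
  simp only
  rw [Real.log_sqrt hx.1, mul_pow, this]; ring

lemma aux_anti2 (n : ℕ) (x : ℝ) (hx : 0 < x) :
    HasDerivAt (fun x : ℝ => x ^ n * (x * Real.log x ^ 2) / (n + 1)
      - 2 * (x ^ n * (x * Real.log x)) / (n + 1) ^ 2 + 2 * (x ^ n * x) / (n + 1) ^ 3)
      (x ^ n * Real.log x ^ 2) x := by
  have hl := Real.hasDerivAt_log hx.ne'
  have hi := hasDerivAt_id x
  have hp := hasDerivAt_pow (n + 1) x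
  have h1 := ((hp.mul (hl.pow 2)).div_const ((n : ℝ) + 1)).sub
    (((hp.mul hl).const_mul 2).div_const (((n : ℝ) + 1) ^ 2)) |>.add
    ((hp.const_mul 2).div_const (((n : ℝ) + 1) ^ 3))
  have hn : (n : ℝ) + 1 ≠ 0 := by positivity
  convert! h1 using 1
  · funext y
    simp only [Pi.add_apply, Pi.sub_apply, Pi.mul_apply, Pi.pow_apply]
    ring
  · push_cast
    simp only [pow_succ, Pi.pow_apply]
    field_simp
    ring

lemma aux_anti1 (n : ℕ) (x : ℝ) (hx : 0 < x) :
    HasDerivAt (fun x : ℝ => x ^ n * (x * Real.log x) / (n + 1)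
      - (x ^ n * x) / (n + 1) ^ 2)
      (x ^ n * Real.log x) x := by
  have hl := Real.hasDerivAt_log hx.ne'
  have hp := hasDerivAt_pow (n + 1) x
  have h1 := ((hp.mul hl).div_const ((n : ℝ) + 1)).sub
    (hp.div_const (((n : ℝ) + 1) ^ 2))
  have hn : (n : ℝ) + 1 ≠ 0 := by positivity
  convert! h1 using 1
  · funext y
    simp only [Pi.sub_apply, Pi.mul_apply]
    ring
  · push_cast
    simp only [pow_succ]
    field_simp
    ring

lemma aux_int_log2 : IntegrableOn (fun x : ℝ => Real.log x ^ 2) (Set.Ioo 0 1) := by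
  have h : IntegrableOn (fun x : ℝ => x ^ 0 * Real.log x ^ 2) (Set.Ioc 0 1) := by
    refine intervalIntegral.integrableOn_deriv_of_nonneg (g := fun x : ℝ => x ^ 0 * (x * Real.log x ^ 2) / ((0 : ℕ) + 1)
      - 2 * (x ^ 0 * (x * Real.log x)) / ((0 : ℕ) + 1) ^ 2 + 2 * (x ^ 0 * x) / ((0 : ℕ) + 1) ^ 3) ?_ ?_ ?_
    · have h2 := aux_cont_xlog2
      have h1 := continuous_mul_log.continuousOn (s := Set.Icc 0 1)
      fun_prop
    · intro x hx
      exact aux_anti2 0 x hx.1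
    · intro x hx
      positivity
  simpa using h.mono_set Set.Ioo_subset_Ioc_self

lemma aux_int_log : IntegrableOn (fun x : ℝ => Real.log x) (Set.Ioo 0 1) := by
  have := (intervalIntegral.intervalIntegrable_log' (a := 0) (b := 1)).1
  exact this.mono_set Set.Ioo_subset_Ioc_self

/-- domination -/
lemma aux_dom {f g : ℝ → ℝ} (hg : IntegrableOn g (Set.Ioo 0 1)) (hf : Measurable f)
    (h : ∀ x ∈ Set.Ioo (0 : ℝ) 1, |f x| ≤ g x) : IntegrableOn f (Set.Ioo 0 1) := by
  refine Integrable.mono' hg hf.aestronglyMeasurable ?_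
  exact (ae_restrict_iff' measurableSet_Ioo).2 (Filter.Eventually.of_forall h)

lemma aux_int_const (c : ℝ) : IntegrableOn (fun _ : ℝ => c) (Set.Ioo (0 : ℝ) 1) :=
  integrableOn_const (by simp)

lemma aux_mom2 (n : ℕ) : IntegrableOn (fun x : ℝ => x ^ n * Real.log x ^ 2) (Set.Ioo 0 1) ∧
    ∫ x in Set.Ioo (0 : ℝ) 1, x ^ n * Real.log x ^ 2 = 2 / ((n : ℝ) + 1) ^ 3 := by
  have hi : IntegrableOn (fun x : ℝ => x ^ n * Real.log x ^ 2) (Set.Ioo 0 1) := by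
    refine aux_dom aux_int_log2 (by fun_prop) ?_
    intro x hx
    rw [abs_of_nonneg (mul_nonneg (pow_nonneg hx.1.le _) (sq_nonneg _))]
    exact mul_le_of_le_one_left (sq_nonneg _) (pow_le_one₀ hx.1.le hx.2.le)
  refine ⟨hi, ?_⟩
  rw [← integral_Ioc_eq_integral_Ioo, ← intervalIntegral.integral_of_le zero_le_one,
    intervalIntegral.integral_eq_sub_of_hasDerivAt_of_le zero_le_one _ (fun x hx => aux_anti2 n x hx.1)]
  · simp
  · rw [intervalIntegrable_iff_integrableOn_Ioo_of_le zero_le_one]; exact hi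
  · have h2 := aux_cont_xlog2
    have h1 := continuous_mul_log.continuousOn (s := Set.Icc 0 1)
    fun_prop

lemma aux_mom1 (n : ℕ) : IntegrableOn (fun x : ℝ => x ^ n * Real.log x) (Set.Ioo 0 1) ∧
    ∫ x in Set.Ioo (0 : ℝ) 1, x ^ n * Real.log x = - (1 / ((n : ℝ) + 1) ^ 2) := by
  have hi : IntegrableOn (fun x : ℝ => x ^ n * Real.log x) (Set.Ioo 0 1) := by
    refine aux_dom aux_int_log.abs (by fun_prop) ?_
    intro x hx
    rw [abs_mul, abs_of_nonneg (pow_nonneg hx.1.le _)]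
    exact mul_le_of_le_one_left (abs_nonneg _) (pow_le_one₀ hx.1.le hx.2.le)
  refine ⟨hi, ?_⟩
  rw [← integral_Ioc_eq_integral_Ioo, ← intervalIntegral.integral_of_le zero_le_one,
    intervalIntegral.integral_eq_sub_of_hasDerivAt_of_le zero_le_one _ (fun x hx => aux_anti1 n x hx.1)]
  · simp
  · rw [intervalIntegrable_iff_integrableOn_Ioo_of_le zero_le_one]; exact hi
  · have h1 := continuous_mul_log.continuousOn (s := Set.Icc 0 1)
    fun_prop

lemma aux_P : ∫ x in Set.Ioo (0 : ℝ) 1, Real.log x ^ 2 / (1 - x)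
    = 2 * ∑' k : ℕ, 1 / ((k : ℝ) + 1) ^ 3 := by
  have hs : Summable fun k : ℕ => 2 * (1 / ((k : ℝ) + 1) ^ 3) := by
    have := (summable_nat_add_iff 1).2 (Real.summable_one_div_nat_pow.2 (show 1 < 3 by norm_num))
    exact (this.mul_left 2).congr (fun k => by push_cast; rfl)
  have h := hasSum_integral_of_summable_integral_norm (μ := volume.restrict (Set.Ioo (0 : ℝ) 1))
    (F := fun (n : ℕ) x => x ^ n * Real.log x ^ 2) (fun n => (aux_mom2 n).1) ?_
  · rw [← tsum_mul_left]
    have h2 := h.tsum_eq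
    simp only [(aux_mom2 _).2] at h2
    rw [setIntegral_congr_fun (g := fun x => Real.log x ^ 2 / (1 - x)) measurableSet_Ioo] at h2
    · rw [← h2]; congr 1; ext n; ring
    · intro x hx
      simp only
      rw [tsum_mul_right, tsum_geometric_of_lt_one hx.1.le hx.2]
      field_simp
  · refine hs.congr (fun n => ?_)
    rw [setIntegral_congr_fun (g := fun x => x ^ n * Real.log x ^ 2) measurableSet_Ioo, (aux_mom2 n).2]
    · ring
    · intro x hx
      simp only
      rw [Real.norm_of_nonneg (mul_nonneg (pow_nonneg hx.1.le _) (sq_nonneg _))]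

lemma aux_D : ∫ x in Set.Ioo (0 : ℝ) 1, Real.log x / (1 - x) = - (π ^ 2 / 6) := by
  have hs0 : HasSum (fun k : ℕ => (1 / ((k : ℝ) + 1) ^ 2)) (π ^ 2 / 6) := by
    have := (hasSum_nat_add_iff' 1).2 hasSum_zeta_two
    simpa using this
  have hs := hs0.summable
  have h := hasSum_integral_of_summable_integral_norm (μ := volume.restrict (Set.Ioo (0 : ℝ) 1))
    (F := fun (n : ℕ) x => x ^ n * Real.log x) (fun n => (aux_mom1 n).1) ?_
  · have h2 := h.tsum_eq
    simp only [(aux_mom1 _).2] at h2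
    rw [setIntegral_congr_fun (g := fun x => Real.log x / (1 - x)) measurableSet_Ioo] at h2
    · rw [← h2, tsum_neg, hs0.tsum_eq]
    · intro x hx
      simp only
      rw [tsum_mul_right, tsum_geometric_of_lt_one hx.1.le hx.2]
      field_simp
  · refine hs.congr (fun n => ?_)
    rw [setIntegral_congr_fun (g := fun x => - (x ^ n * Real.log x)) measurableSet_Ioo, integral_neg,
      (aux_mom1 n).2]
    · ring
    · intro x hx
      simp only
      rw [Real.norm_of_nonpos (mul_nonpos_of_nonneg_of_nonpos (pow_nonneg hx.1.le _)
        (Real.log_nonpos hx.1.le hx.2.le))]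

/-! substitutions -/
lemma aux_sub_refl (g : ℝ → ℝ) :
    (IntegrableOn g (Set.Ioo 0 1) ↔ IntegrableOn (fun x => g (1 - x)) (Set.Ioo 0 1)) ∧
    ∫ x in Set.Ioo (0 : ℝ) 1, g x = ∫ x in Set.Ioo (0 : ℝ) 1, g (1 - x) := by
  have him : (fun x : ℝ => 1 - x) '' Set.Ioo 0 1 = Set.Ioo 0 1 := by simp
  have hd : ∀ x ∈ Set.Ioo (0 : ℝ) 1, HasDerivWithinAt (fun x : ℝ => 1 - x) (-1) (Set.Ioo 0 1) x :=
    fun x _ => ((hasDerivAt_id x).const_sub 1).hasDerivWithinAt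
  have hinj : Set.InjOn (fun x : ℝ => 1 - x) (Set.Ioo 0 1) := fun x _ y _ h => by
    simpa using h
  have h1 := integrableOn_image_iff_integrableOn_abs_deriv_smul measurableSet_Ioo hd hinj g
  have h2 := integral_image_eq_integral_abs_deriv_smul measurableSet_Ioo hd hinj g
  rw [him] at h1 h2
  simp only [abs_neg, abs_one, one_smul] at h1 h2
  exact ⟨h1, h2⟩

lemma aux_sub_sq (g : ℝ → ℝ) :
    (IntegrableOn g (Set.Ioo 0 1) ↔ IntegrableOn (fun x => 2 * x * g (x ^ 2)) (Set.Ioo 0 1)) ∧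
    ∫ x in Set.Ioo (0 : ℝ) 1, g x = ∫ x in Set.Ioo (0 : ℝ) 1, 2 * x * g (x ^ 2) := by
  have him : (fun x : ℝ => x ^ 2) '' Set.Ioo 0 1 = Set.Ioo 0 1 := by
    ext y
    constructor
    · rintro ⟨x, hx, rfl⟩
      exact ⟨pow_pos hx.1 2, pow_lt_one₀ hx.1.le hx.2 two_ne_zero⟩
    · intro hy
      exact ⟨√y, ⟨Real.sqrt_pos.2 hy.1, by rw [Real.sqrt_lt' one_pos]; simpa using hy.2⟩,
        Real.sq_sqrt hy.1.le⟩
  have hd : ∀ x ∈ Set.Ioo (0 : ℝ) 1, HasDerivWithinAt (fun x : ℝ => x ^ 2) (2 * x) (Set.Ioo 0 1) x :=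
    fun x _ => by simpa using (hasDerivAt_pow 2 x).hasDerivWithinAt
  have hinj : Set.InjOn (fun x : ℝ => x ^ 2) (Set.Ioo 0 1) := fun x hx y hy h => by
    exact (pow_left_inj₀ hx.1.le hy.1.le two_ne_zero).1 h
  have h1 := integrableOn_image_iff_integrableOn_abs_deriv_smul measurableSet_Ioo hd hinj g
  have h2 := integral_image_eq_integral_abs_deriv_smul measurableSet_Ioo hd hinj g
  rw [him] at h1 h2
  have hc : Set.EqOn (fun x => |2 * x| • g (x ^ 2)) (fun x => 2 * x * g (x ^ 2)) (Set.Ioo 0 1) := by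
    intro x hx
    simp only [smul_eq_mul]
    rw [abs_of_pos (by linarith [hx.1])]
  rw [integrableOn_congr_fun hc measurableSet_Ioo] at h1
  rw [setIntegral_congr_fun measurableSet_Ioo hc] at h2
  exact ⟨h1, h2⟩

lemma aux_sub_mob (g : ℝ → ℝ) :
    (IntegrableOn g (Set.Ioo 0 1) ↔
      IntegrableOn (fun x => 2 / (1 + x) ^ 2 * g ((1 - x) / (1 + x))) (Set.Ioo 0 1)) ∧
    ∫ x in Set.Ioo (0 : ℝ) 1, g x =
      ∫ x in Set.Ioo (0 : ℝ) 1, 2 / (1 + x) ^ 2 * g ((1 - x) / (1 + x)) := by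
  have key : ∀ x ∈ Set.Ioo (0 : ℝ) 1, (1 - x) / (1 + x) ∈ Set.Ioo (0 : ℝ) 1 := by
    intro x hx
    have h1 : 0 < 1 + x := by linarith [hx.1]
    exact ⟨div_pos (by linarith [hx.2]) h1, by rw [div_lt_one h1]; linarith [hx.1]⟩
  have inv : ∀ x ∈ Set.Ioo (0 : ℝ) 1, (1 - (1 - x) / (1 + x)) / (1 + (1 - x) / (1 + x)) = x := by
    intro x hx
    have h1 : 1 + x ≠ 0 := by linarith [hx.1]
    field_simp
    ring
  have him : (fun x : ℝ => (1 - x) / (1 + x)) '' Set.Ioo 0 1 = Set.Ioo 0 1 := by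
    ext y
    constructor
    · rintro ⟨x, hx, rfl⟩
      exact key x hx
    · intro hy
      exact ⟨_, key y hy, inv y hy⟩
  have hd : ∀ x ∈ Set.Ioo (0 : ℝ) 1, HasDerivWithinAt (fun x : ℝ => (1 - x) / (1 + x))
      (-(2 / (1 + x) ^ 2)) (Set.Ioo 0 1) x := by
    intro x hx
    have h1 : 1 + x ≠ 0 := by linarith [hx.1]
    have := ((hasDerivAt_id x).const_sub 1).div ((hasDerivAt_id x).const_add 1) h1
    refine HasDerivAt.hasDerivWithinAt ?_
    convert! this using 1
    simp only [id]
    field_simp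
    ring
  have hinj : Set.InjOn (fun x : ℝ => (1 - x) / (1 + x)) (Set.Ioo 0 1) := fun x hx y hy h => by
    simp only at h
    rw [← inv x hx, ← inv y hy, h]
  have h1 := integrableOn_image_iff_integrableOn_abs_deriv_smul measurableSet_Ioo hd hinj g
  have h2 := integral_image_eq_integral_abs_deriv_smul measurableSet_Ioo hd hinj g
  rw [him] at h1 h2
  have hc : ∀ x : ℝ, |-(2 / (1 + x) ^ 2)| = 2 / (1 + x) ^ 2 := by
    intro x
    rw [abs_neg, abs_of_nonneg (by positivity)]
  simp only [hc, smul_eq_mul] at h1 h2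
  exact ⟨h1, h2⟩

lemma aux_bd {x : ℝ} (hx : x ∈ Set.Ioo (0 : ℝ) 1) : |Real.log x / (1 - x)| ≤ 1 + |Real.log x| := by
  have h1 : 0 < 1 - x := by linarith [hx.2]
  have h2 : Real.log x ≤ 0 := Real.log_nonpos hx.1.le hx.2.le
  rw [abs_div, abs_of_pos h1, div_le_iff₀ h1, abs_of_nonpos h2]
  have h3 := Real.log_le_sub_one_of_pos (inv_pos.2 hx.1)
  rw [Real.log_inv] at h3
  have h4 := mul_le_mul_of_nonneg_left h3 hx.1.le
  rw [mul_sub, mul_inv_cancel₀ hx.1.ne'] at h4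
  nlinarith

lemma aux_iD : IntegrableOn (fun x : ℝ => Real.log x / (1 - x)) (Set.Ioo 0 1) :=
  aux_dom ((aux_int_const 1).add aux_int_log.abs) (by fun_prop) (fun _ hx => aux_bd hx)

lemma aux_iP : IntegrableOn (fun x : ℝ => Real.log x ^ 2 / (1 - x)) (Set.Ioo 0 1) := by
  refine aux_dom (aux_int_log.abs.add aux_int_log2) (by fun_prop) (fun x hx => ?_)
  have h := mul_le_mul_of_nonneg_left (aux_bd hx) (abs_nonneg (Real.log x))
  rw [← abs_mul] at h
  calc _ = |Real.log x * (Real.log x / (1 - x))| := by congr 1; ring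
    _ ≤ _ := h
    _ = _ := by simp only [Pi.add_apply]; rw [mul_add, ← sq, sq_abs]; ring

lemma aux_iE : IntegrableOn (fun x : ℝ => Real.log x / (1 + x)) (Set.Ioo 0 1) := by
  refine aux_dom aux_int_log.abs (by fun_prop) (fun x hx => ?_)
  rw [abs_div]
  refine div_le_self (abs_nonneg _) ?_
  rw [abs_of_pos] <;> linarith [hx.1]

lemma aux_iQ : IntegrableOn (fun x : ℝ => Real.log x ^ 2 / (1 + x)) (Set.Ioo 0 1) := by
  refine aux_dom aux_int_log2 (by fun_prop) (fun x hx => ?_)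
  rw [abs_div, abs_of_nonneg (sq_nonneg (Real.log x))]
  refine div_le_self (sq_nonneg _) ?_
  rw [abs_of_pos] <;> linarith [hx.1]

lemma aux_E : ∫ x in Set.Ioo (0 : ℝ) 1, Real.log x / (1 + x)
    = (∫ x in Set.Ioo (0 : ℝ) 1, Real.log x / (1 - x)) / 2 := by
  have h := (aux_sub_sq (fun x => Real.log x / (1 - x))).2
  have h2 : ∫ x in Set.Ioo (0 : ℝ) 1, 2 * x * (Real.log (x ^ 2) / (1 - x ^ 2)) =
      ∫ x in Set.Ioo (0 : ℝ) 1, 2 * (Real.log x / (1 - x) - Real.log x / (1 + x)) := by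
    refine setIntegral_congr_fun measurableSet_Ioo (fun x hx => ?_)
    have h1 : 1 - x ≠ 0 := by linarith [hx.2]
    have h2 : 1 + x ≠ 0 := by linarith [hx.1]
    have h3 : 1 - x ^ 2 ≠ 0 := by rw [show 1 - x ^ 2 = (1 - x) * (1 + x) by ring]; positivity
    simp only [Real.log_pow]
    push_cast
    field_simp
    ring
  try simp only at h
  rw [h2, integral_const_mul, integral_sub aux_iD aux_iE] at h
  linarith

lemma aux_Q : ∫ x in Set.Ioo (0 : ℝ) 1, Real.log x ^ 2 / (1 + x)
    = 3 / 4 * (∫ x in Set.Ioo (0 : ℝ) 1, Real.log x ^ 2 / (1 - x)) := by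
  have h := (aux_sub_sq (fun x => Real.log x ^ 2 / (1 - x))).2
  have h2 : ∫ x in Set.Ioo (0 : ℝ) 1, 2 * x * (Real.log (x ^ 2) ^ 2 / (1 - x ^ 2)) =
      ∫ x in Set.Ioo (0 : ℝ) 1, 4 * (Real.log x ^ 2 / (1 - x) - Real.log x ^ 2 / (1 + x)) := by
    refine setIntegral_congr_fun measurableSet_Ioo (fun x hx => ?_)
    have h1 : 1 - x ≠ 0 := by linarith [hx.2]
    have h2 : 1 + x ≠ 0 := by linarith [hx.1]
    have h3 : 1 - x ^ 2 ≠ 0 := by rw [show 1 - x ^ 2 = (1 - x) * (1 + x) by ring]; positivity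
    simp only [Real.log_pow]
    push_cast
    field_simp
    ring
  try simp only at h
  rw [h2, integral_const_mul, integral_sub aux_iP aux_iQ] at h
  linarith

lemma aux_blog {x : ℝ} (hx : x ∈ Set.Ioo (0 : ℝ) 1) :
    0 ≤ Real.log (1 + x) ∧ Real.log (1 + x) ≤ x := by
  refine ⟨Real.log_nonneg (by linarith [hx.1]), ?_⟩
  have := Real.log_le_sub_one_of_pos (show 0 < 1 + x by linarith [hx.1])
  linarith

lemma aux_iTa : IntegrableOn (fun x : ℝ => Real.log (1 - x) / x) (Set.Ioo 0 1) := by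
  simpa using (aux_sub_refl _).1.1 aux_iD

lemma aux_iM : IntegrableOn (fun x : ℝ => Real.log (1 - x) ^ 2 / x) (Set.Ioo 0 1) := by
  simpa using (aux_sub_refl _).1.1 aux_iP

lemma aux_M : ∫ x in Set.Ioo (0 : ℝ) 1, Real.log (1 - x) ^ 2 / x =
    ∫ x in Set.Ioo (0 : ℝ) 1, Real.log x ^ 2 / (1 - x) := by
  simpa using (aux_sub_refl (fun x => Real.log (1 - x) ^ 2 / x)).2

lemma aux_iTb : IntegrableOn (fun x : ℝ => Real.log (1 + x) / x) (Set.Ioo 0 1) := by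
  refine aux_dom (aux_int_const 1) (by fun_prop) (fun x hx => ?_)
  obtain ⟨h1, h2⟩ := aux_blog hx
  rw [abs_of_nonneg (div_nonneg h1 hx.1.le), div_le_one hx.1]
  exact h2

lemma aux_iV : IntegrableOn (fun x : ℝ => Real.log (1 + x) ^ 2 / x) (Set.Ioo 0 1) := by
  refine aux_dom (aux_int_const 1) (by fun_prop) (fun x hx => ?_)
  obtain ⟨h1, h2⟩ := aux_blog hx
  rw [abs_of_nonneg (div_nonneg (sq_nonneg _) hx.1.le), div_le_one hx.1]
  nlinarith [hx.1, hx.2]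

lemma aux_iA : IntegrableOn (fun x : ℝ => Real.log (1 - x) * Real.log (1 + x) / x)
    (Set.Ioo 0 1) := by
  refine aux_dom (aux_iM.add aux_iV) (by fun_prop) (fun x hx => ?_)
  simp only [Pi.add_apply]
  rw [abs_div, abs_of_pos hx.1, ← add_div]
  refine div_le_div_of_nonneg_right ?_ hx.1.le
  rw [abs_le]
  constructor <;> nlinarith [sq_nonneg (Real.log (1 - x) + Real.log (1 + x)),
    sq_nonneg (Real.log (1 - x) - Real.log (1 + x)), sq_nonneg (Real.log (1 - x)),
    sq_nonneg (Real.log (1 + x))]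

lemma aux_N : ∫ x in Set.Ioo (0 : ℝ) 1, Real.log (1 - x) ^ 2 / x =
    2 * ((∫ x in Set.Ioo (0 : ℝ) 1, Real.log (1 - x) ^ 2 / x)
      + 2 * (∫ x in Set.Ioo (0 : ℝ) 1, Real.log (1 - x) * Real.log (1 + x) / x)
      + ∫ x in Set.Ioo (0 : ℝ) 1, Real.log (1 + x) ^ 2 / x) := by
  have h := (aux_sub_sq (fun x => Real.log (1 - x) ^ 2 / x)).2
  try simp only at h
  conv_lhs => rw [h]
  have i1 : IntegrableOn (fun x : ℝ => Real.log (1 - x) ^ 2 / x +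
      2 * (Real.log (1 - x) * Real.log (1 + x) / x)) (Set.Ioo 0 1) := aux_iM.add (aux_iA.const_mul 2)
  rw [← integral_const_mul, ← integral_add aux_iM (aux_iA.const_mul 2),
    ← integral_add i1 aux_iV, ← integral_const_mul]
  refine setIntegral_congr_fun measurableSet_Ioo (fun x hx => ?_)
  have h1 : 1 - x ≠ 0 := by linarith [hx.2]
  have h2 : 1 + x ≠ 0 := by linarith [hx.1]
  have h3 : x ≠ 0 := hx.1.ne'
  try simp only
  rw [show 1 - x ^ 2 = (1 - x) * (1 + x) by ring, Real.log_mul h1 h2]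
  field_simp
  ring

lemma aux_R : (∫ x in Set.Ioo (0 : ℝ) 1, Real.log x ^ 2 / (1 - x)) +
    (∫ x in Set.Ioo (0 : ℝ) 1, Real.log x ^ 2 / (1 + x)) =
    ((∫ x in Set.Ioo (0 : ℝ) 1, Real.log (1 - x) ^ 2 / x)
      - 2 * (∫ x in Set.Ioo (0 : ℝ) 1, Real.log (1 - x) * Real.log (1 + x) / x)
      + ∫ x in Set.Ioo (0 : ℝ) 1, Real.log (1 + x) ^ 2 / x) := by
  have i1 : IntegrableOn (fun x : ℝ => Real.log (1 - x) ^ 2 / x -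
      2 * (Real.log (1 - x) * Real.log (1 + x) / x)) (Set.Ioo 0 1) := aux_iM.sub (aux_iA.const_mul 2)
  rw [← integral_add aux_iP aux_iQ, (aux_sub_mob _).2,
    ← integral_const_mul, ← integral_sub aux_iM (aux_iA.const_mul 2),
    ← integral_add i1 aux_iV]
  refine setIntegral_congr_fun measurableSet_Ioo (fun x hx => ?_)
  have h1 : 1 - x ≠ 0 := by linarith [hx.2]
  have h2 : 1 + x ≠ 0 := by linarith [hx.1]
  have h3 : x ≠ 0 := hx.1.ne'
  have e1 : 1 - (1 - x) / (1 + x) = 2 * x / (1 + x) := by field_simp; ring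
  have e2 : 1 + (1 - x) / (1 + x) = 2 / (1 + x) := by field_simp; ring
  try simp only
  rw [e1, e2, Real.log_div h1 h2]
  field_simp
  ring

lemma aux_T : (∫ x in Set.Ioo (0 : ℝ) 1, Real.log x / (1 - x)) +
    (∫ x in Set.Ioo (0 : ℝ) 1, Real.log x / (1 + x)) =
    (∫ x in Set.Ioo (0 : ℝ) 1, Real.log (1 - x) / x)
      - ∫ x in Set.Ioo (0 : ℝ) 1, Real.log (1 + x) / x := by
  rw [← integral_add aux_iD aux_iE, (aux_sub_mob _).2, ← integral_sub aux_iTa aux_iTb]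
  refine setIntegral_congr_fun measurableSet_Ioo (fun x hx => ?_)
  have h1 : 1 - x ≠ 0 := by linarith [hx.2]
  have h2 : 1 + x ≠ 0 := by linarith [hx.1]
  have h3 : x ≠ 0 := hx.1.ne'
  have e1 : 1 - (1 - x) / (1 + x) = 2 * x / (1 + x) := by field_simp; ring
  have e2 : 1 + (1 - x) / (1 + x) = 2 / (1 + x) := by field_simp; ring
  try simp only
  rw [e1, e2, Real.log_div h1 h2]
  field_simp

lemma aux_iJ : IntegrableOn (fun x : ℝ => Real.log (1 + x) * (Real.log x / (1 - x)))
    (Set.Ioo 0 1) := by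
  refine aux_dom aux_iD.abs (by fun_prop) (fun x hx => ?_)
  obtain ⟨h1, h2⟩ := aux_blog hx
  rw [abs_mul, abs_of_nonneg h1]
  exact mul_le_of_le_one_left (abs_nonneg _) (by linarith [hx.2])

lemma aux_iS : IntegrableOn (fun x : ℝ => Real.log (1 + x) * (Real.log x / (1 + x)))
    (Set.Ioo 0 1) := by
  refine aux_dom aux_iE.abs (by fun_prop) (fun x hx => ?_)
  obtain ⟨h1, h2⟩ := aux_blog hx
  rw [abs_mul, abs_of_nonneg h1]
  exact mul_le_of_le_one_left (abs_nonneg _) (by linarith [hx.2])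

lemma aux_J : (∫ x in Set.Ioo (0 : ℝ) 1, Real.log (1 + x) * (Real.log x / (1 - x))) +
    (∫ x in Set.Ioo (0 : ℝ) 1, Real.log (1 + x) * (Real.log x / (1 + x))) =
    Real.log 2 * ((∫ x in Set.Ioo (0 : ℝ) 1, Real.log (1 - x) / x)
      - ∫ x in Set.Ioo (0 : ℝ) 1, Real.log (1 + x) / x)
    - (∫ x in Set.Ioo (0 : ℝ) 1, Real.log (1 - x) * Real.log (1 + x) / x)
    + ∫ x in Set.Ioo (0 : ℝ) 1, Real.log (1 + x) ^ 2 / x := by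
  have i1 : IntegrableOn (fun x : ℝ => Real.log 2 * (Real.log (1 - x) / x - Real.log (1 + x) / x))
      (Set.Ioo 0 1) := (aux_iTa.sub aux_iTb).const_mul _
  have i2 : IntegrableOn (fun x : ℝ => Real.log 2 * (Real.log (1 - x) / x - Real.log (1 + x) / x)
      - Real.log (1 - x) * Real.log (1 + x) / x) (Set.Ioo 0 1) := i1.sub aux_iA
  rw [← integral_add aux_iJ aux_iS, (aux_sub_mob _).2, ← integral_sub aux_iTa aux_iTb,
    ← integral_const_mul, ← integral_sub i1 aux_iA,
    ← integral_add i2 aux_iV]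
  refine setIntegral_congr_fun measurableSet_Ioo (fun x hx => ?_)
  have h1 : 1 - x ≠ 0 := by linarith [hx.2]
  have h2 : 1 + x ≠ 0 := by linarith [hx.1]
  have h3 : x ≠ 0 := hx.1.ne'
  have e1 : 1 - (1 - x) / (1 + x) = 2 * x / (1 + x) := by field_simp; ring
  have e2 : 1 + (1 - x) / (1 + x) = 2 / (1 + x) := by field_simp; ring
  try simp only
  rw [e1, e2, Real.log_div h1 h2, Real.log_div two_ne_zero h2]
  field_simp
  ring

lemma aux_S : ∫ x in Set.Ioo (0 : ℝ) 1, Real.log (1 + x) * (Real.log x / (1 + x)) =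
    - (∫ x in Set.Ioo (0 : ℝ) 1, Real.log (1 + x) ^ 2 / x) / 2 := by
  have hi : IntegrableOn (fun x : ℝ => Real.log (1 + x) ^ 2 / x +
      2 * (Real.log (1 + x) * (Real.log x / (1 + x)))) (Set.Ioo 0 1) :=
    aux_iV.add (aux_iS.const_mul 2)
  have h : ∫ x in (0 : ℝ)..1, (Real.log (1 + x) ^ 2 / x +
      2 * (Real.log (1 + x) * (Real.log x / (1 + x)))) = 0 - 0 := by
    refine intervalIntegral.integral_eq_sub_of_hasDerivAt_of_tendsto
      (f := fun x => Real.log (1 + x) ^ 2 * Real.log x) zero_lt_one ?_ ?_ ?_ ?_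
    · intro x hx
      have h2 : 1 + x ≠ 0 := by linarith [hx.1]
      have h3 : x ≠ 0 := hx.1.ne'
      have := ((((hasDerivAt_id x).const_add 1).log h2).pow 2).mul (Real.hasDerivAt_log h3)
      convert! this using 1
      simp [id]
      field_simp
      ring
    · rw [intervalIntegrable_iff_integrableOn_Ioo_of_le zero_le_one]; exact hi
    · have ht : Filter.Tendsto (fun x : ℝ => |x * Real.log x|) (nhdsWithin 0 (Set.Ioi 0)) (nhds 0) := by
        have := (continuous_mul_log.abs.tendsto 0)
        simp only [zero_mul, abs_zero] at this
        exact this.mono_left nhdsWithin_le_nhds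
      refine squeeze_zero_norm' ?_ ht
      filter_upwards [Ioo_mem_nhdsGT (zero_lt_one (α := ℝ))] with x hx
      obtain ⟨h1, h2⟩ := aux_blog hx
      rw [Real.norm_eq_abs, abs_mul, abs_mul, abs_of_pos hx.1, abs_of_nonneg (sq_nonneg _)]
      refine mul_le_mul_of_nonneg_right ?_ (abs_nonneg _)
      nlinarith [hx.1, hx.2]
    · have hc : ContinuousAt (fun x : ℝ => Real.log (1 + x) ^ 2 * Real.log x) 1 := by
        have h2 : (1 : ℝ) + 1 ≠ 0 := by norm_num
        have h1 : (1 : ℝ) ≠ 0 := one_ne_zero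
        fun_prop (disch := assumption)
      have := hc.tendsto
      simp only [Real.log_one, mul_zero] at this
      exact this.mono_left nhdsWithin_le_nhds
  rw [intervalIntegral.integral_of_le zero_le_one, integral_Ioc_eq_integral_Ioo,
    integral_add aux_iV (aux_iS.const_mul 2), integral_const_mul] at h
  linarith

lemma aux_ii : IntervalIntegrable (fun y : ℝ => Real.log y / (y - 1)) volume 0 1 := by
  rw [intervalIntegrable_iff_integrableOn_Ioo_of_le zero_le_one]
  refine aux_iD.neg.congr_fun (fun x hx => ?_) measurableSet_Ioo
  simp only [Pi.neg_apply]
  rw [← neg_sub x 1, div_neg, neg_neg]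

lemma aux_contG : ContinuousOn (fun x : ℝ => ∫ y in (0:ℝ)..x, Real.log y / (y - 1))
    (Set.Icc 0 1) := by
  have := intervalIntegral.continuousOn_primitive_interval' aux_ii (a := 0) (by simp)
  rwa [Set.uIcc_of_le zero_le_one] at this

lemma aux_IBP : ∫ x in (0:ℝ)..1, (1 / (1 + x)) * (∫ y in (0:ℝ)..x, Real.log y / (y - 1)) =
    - Real.log 2 * (∫ x in Set.Ioo (0 : ℝ) 1, Real.log x / (1 - x)) +
    ∫ x in Set.Ioo (0 : ℝ) 1, Real.log (1 + x) * (Real.log x / (1 - x)) := by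
  have hne : ∀ x ∈ Set.Icc (0 : ℝ) 1, 1 + x ≠ 0 := fun x hx => by linarith [hx.1]
  have hi1 : IntegrableOn (fun x : ℝ => (1 / (1 + x)) * (∫ y in (0:ℝ)..x, Real.log y / (y - 1)))
      (Set.Ioo 0 1) := by
    refine IntegrableOn.mono_set (ContinuousOn.integrableOn_Icc (a := 0) (b := 1) ?_)
      Set.Ioo_subset_Icc_self
    refine ContinuousOn.mul ?_ aux_contG
    fun_prop (disch := assumption)
  have h : ∫ x in (0 : ℝ)..1, ((1 / (1 + x)) * (∫ y in (0:ℝ)..x, Real.log y / (y - 1)) -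
      Real.log (1 + x) * (Real.log x / (1 - x))) =
      Real.log (1 + 1) * (∫ y in (0:ℝ)..1, Real.log y / (y - 1)) -
      Real.log (1 + 0) * (∫ y in (0:ℝ)..0, Real.log y / (y - 1)) := by
    refine intervalIntegral.integral_eq_sub_of_hasDerivAt_of_le
      (f := fun x => Real.log (1 + x) * ∫ y in (0:ℝ)..x, Real.log y / (y - 1)) zero_le_one ?_ ?_ ?_
    · refine ContinuousOn.mul ?_ aux_contG
      fun_prop (disch := assumption)
    · intro x hx
      have h2 : 1 + x ≠ 0 := by linarith [hx.1]
      have h3 : x ≠ 0 := hx.1.ne'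
      have h4 : x - 1 ≠ 0 := by linarith [hx.2]
      have hG : HasDerivAt (fun x : ℝ => ∫ y in (0:ℝ)..x, Real.log y / (y - 1))
          (Real.log x / (x - 1)) x := by
        refine intervalIntegral.integral_hasDerivAt_right ?_ ?_ ?_
        · refine aux_ii.mono_set ?_
          rw [Set.uIcc_of_le zero_le_one, Set.uIcc_of_le hx.1.le]
          exact Set.Icc_subset_Icc_right hx.2.le
        · have : Measurable (fun y : ℝ => Real.log y / (y - 1)) := by fun_prop
          exact this.stronglyMeasurable.stronglyMeasurableAtFilter
        · fun_prop (disch := assumption)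
      have := (((hasDerivAt_id x).const_add 1).log h2).mul hG
      convert! this using 1
      simp only [id]
      rw [← neg_sub x 1, div_neg]
      ring
    · rw [intervalIntegrable_iff_integrableOn_Ioo_of_le zero_le_one]; exact hi1.sub aux_iJ
  have hG1 : ∫ y in (0:ℝ)..1, Real.log y / (y - 1) =
      - ∫ x in Set.Ioo (0 : ℝ) 1, Real.log x / (1 - x) := by
    rw [intervalIntegral.integral_of_le zero_le_one, integral_Ioc_eq_integral_Ioo, ← integral_neg]
    refine setIntegral_congr_fun measurableSet_Ioo (fun x hx => ?_)
    try simp only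
    rw [← neg_sub x 1, div_neg, neg_neg]
  rw [hG1, intervalIntegral.integral_same, intervalIntegral.integral_of_le zero_le_one,
    integral_Ioc_eq_integral_Ioo, integral_sub hi1 aux_iJ] at h
  rw [intervalIntegral.integral_of_le zero_le_one, integral_Ioc_eq_integral_Ioo]
  norm_num at h
  norm_num
  linarith

/-- `∫₀¹ (1/(1+x))·(∫₀ˣ log(y)/(y−1) dy) dx = ζ(3) − (π²/12)·log(2)`. -/
theorem integral_dilog_kernel_zero :
    ∫ x in (0:ℝ)..1, (1 / (1 + x)) * (∫ y in (0:ℝ)..x, Real.log y / (y - 1)) =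
      (∑' k : ℕ, 1 / ((k : ℝ) + 1) ^ 3) - (π ^ 2 / 12) * Real.log 2 := by
  have h1 := aux_IBP
  have h2 := aux_J
  have h3 := aux_S
  have h4 := aux_T
  have h5 := aux_R
  have h6 := aux_N
  have h7 := aux_M
  have h8 := aux_Q
  have h9 := aux_E
  have h10 := aux_P
  have h11 := aux_D
  rw [← h4, h9, h11] at h2
  rw [h11] at h1
  rw [h1]
  linarith
end

section
/- ∫₀¹ (x/(1+x)) · ( ∫₀ˣ log(y)/(y−1) dy ) dx = ( log(2)·(π²/6) − 2·ζ(3) + 2 )/2, where ζ(3) = Σ_{k=1}^{∞} 1/k³. -/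
open MeasureTheory Real

namespace DilogAux

open Set Filter Topology

theorem ftc {f f' : ℝ → ℝ} {a b : ℝ} (hd : ∀ x ∈ Ioo (0:ℝ) 1, HasDerivAt f (f' x) x)
    (hi : IntegrableOn f' (Ioo 0 1)) (ha : Tendsto f (𝓝[>] 0) (𝓝 a))
    (hb : Tendsto f (𝓝[<] 1) (𝓝 b)) : ∫ x in Ioo (0:ℝ) 1, f' x = b - a := by
  rw [← integral_Ioc_eq_integral_Ioo, ← intervalIntegral.integral_of_le zero_le_one]
  exact intervalIntegral.integral_eq_sub_of_hasDerivAt_of_tendsto zero_lt_one hd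
    ((intervalIntegrable_iff_integrableOn_Ioo_of_le zero_le_one).2 hi) ha hb

theorem ftc_c {f f' : ℝ → ℝ} (hc : ContinuousOn f (Icc 0 1))
    (hd : ∀ x ∈ Ioo (0:ℝ) 1, HasDerivAt f (f' x) x)
    (hn : ∀ x ∈ Ioo (0:ℝ) 1, 0 ≤ f' x) :
    IntegrableOn f' (Ioo 0 1) ∧ ∫ x in Ioo (0:ℝ) 1, f' x = f 1 - f 0 := by
  have hi : IntegrableOn f' (Ioo 0 1) :=
    (intervalIntegral.integrableOn_deriv_of_nonneg hc hd hn).mono_set Ioo_subset_Ioc_self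
  refine ⟨hi, ftc hd hi ?_ ?_⟩
  · have := hc 0 (by simp)
    exact this.mono_left (by
      rw [← nhdsWithin_Ioo_eq_nhdsGT (zero_lt_one (α := ℝ))]
      exact nhdsWithin_mono _ Ioo_subset_Icc_self)
  · have := hc 1 (by simp)
    exact this.mono_left (by
      rw [← nhdsWithin_Ioo_eq_nhdsLT (zero_lt_one (α := ℝ))]
      exact nhdsWithin_mono _ Ioo_subset_Icc_self)

theorem cont_log_sq : ContinuousOn (fun x : ℝ => x * log x ^ 2) (Ici 0) := by
  have h : Continuous (fun x : ℝ => 4 * (√x * log √x) ^ 2) := by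
    have := Real.continuous_mul_log.comp Real.continuous_sqrt
    simp only [Function.comp_def] at this
    fun_prop
  refine h.continuousOn.congr fun x hx => ?_
  have hx : 0 ≤ x := hx
  simp only [Real.log_sqrt hx, mul_pow, Real.sq_sqrt hx]
  ring

theorem mom1 (k : ℕ) : IntegrableOn (fun x : ℝ => x ^ k * (-log x)) (Ioo 0 1) ∧
    ∫ x in Ioo (0:ℝ) 1, x ^ k * (-log x) = 1 / ((k:ℝ) + 1) ^ 2 := by
  have hk : (k:ℝ) + 1 ≠ 0 := by positivity
  have := ftc_c (f := fun x => x ^ k * (x * (1 / ((k:ℝ) + 1) ^ 2) - x * log x / (k + 1)))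
    (f' := fun x : ℝ => x ^ k * (-log x)) ?_ ?_ ?_
  · refine ⟨this.1, this.2.trans ?_⟩
    simp
  · have := Real.continuous_mul_log
    fun_prop
  · intro x hx
    have hx0 : x ≠ 0 := hx.1.ne'
    have h1 := (((hasDerivAt_pow (k+1) x).mul_const (1 / ((k:ℝ) + 1) ^ 2)).sub
      (((hasDerivAt_pow (k+1) x).mul (Real.hasDerivAt_log hx0)).div_const ((k:ℝ)+1)))
    refine (h1.congr_of_eventuallyEq (Eventually.of_forall fun y => ?_)).congr_deriv ?_
    · simp; ring
    · simp
      field_simp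
      ring
  · intro x hx
    have := Real.log_nonpos hx.1.le hx.2.le
    have := pow_nonneg hx.1.le k
    apply mul_nonneg this; linarith

theorem mom2 (k : ℕ) : IntegrableOn (fun x : ℝ => x ^ k * (log x) ^ 2) (Ioo 0 1) ∧
    ∫ x in Ioo (0:ℝ) 1, x ^ k * (log x) ^ 2 = 2 * (1 / ((k:ℝ) + 1) ^ 3) := by
  have hk : (k:ℝ) + 1 ≠ 0 := by positivity
  have := ftc_c (f := fun x => x ^ k * (x * (2 / ((k:ℝ) + 1) ^ 3) - 2 * (x * log x) / (k + 1) ^ 2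
      + (x * log x ^ 2) / (k + 1)))
    (f' := fun x : ℝ => x ^ k * (log x) ^ 2) ?_ ?_ ?_
  · refine ⟨this.1, this.2.trans ?_⟩
    simp; ring
  · have := Real.continuous_mul_log
    have h2 := cont_log_sq.mono (Icc_subset_Ici_self : Icc (0:ℝ) 1 ⊆ Ici 0)
    refine ContinuousOn.mul (by fun_prop) (ContinuousOn.add (by fun_prop) (h2.div_const _))
  · intro x hx
    have hx0 : x ≠ 0 := hx.1.ne'
    have h1 := (((hasDerivAt_pow (k+1) x).mul_const (2 / ((k:ℝ) + 1) ^ 3)).sub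
      (((hasDerivAt_pow (k+1) x).mul (Real.hasDerivAt_log hx0)).mul_const (2 / ((k:ℝ)+1)^2))).add
      (((hasDerivAt_pow (k+1) x).mul ((Real.hasDerivAt_log hx0).pow 2)).div_const ((k:ℝ)+1))
    refine (h1.congr_of_eventuallyEq (Eventually.of_forall fun y => ?_)).congr_deriv ?_
    · simp; ring
    · simp
      field_simp
      ring
  · intro x hx
    have := pow_nonneg hx.1.le k
    positivity

theorem series {g : ℝ → ℝ} {c : ℕ → ℝ} {S : ℝ} (hg : ∀ x ∈ Ioo (0:ℝ) 1, 0 ≤ g x)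
    (hm : ∀ k : ℕ, IntegrableOn (fun x : ℝ => x ^ k * g x) (Ioo 0 1) ∧
      ∫ x in Ioo (0:ℝ) 1, x ^ k * g x = c k) (hS : HasSum c S) (hS0 : S ≠ 0) :
    IntegrableOn (fun x : ℝ => g x / (1 - x)) (Ioo 0 1) ∧
      ∫ x in Ioo (0:ℝ) 1, g x / (1 - x) = S := by
  have hn : ∀ k : ℕ, ∫ x in Ioo (0:ℝ) 1, ‖x ^ k * g x‖ = c k := by
    intro k
    rw [← (hm k).2]
    refine setIntegral_congr_fun measurableSet_Ioo fun x hx => ?_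
    exact Real.norm_of_nonneg (mul_nonneg (pow_nonneg hx.1.le k) (hg x hx))
  have h := hasSum_integral_of_summable_integral_norm (fun k => (hm k).1)
    (by simp only [hn]; exact hS.summable)
  simp only [(hm _).2] at h
  have h2 : ∫ x in Ioo (0:ℝ) 1, g x / (1 - x) = S := by
    rw [hS.unique h]
    refine setIntegral_congr_fun measurableSet_Ioo fun x hx => ?_
    have := (hasSum_geometric_of_lt_one hx.1.le hx.2).mul_right (g x)
    simp only [this.tsum_eq]
    rw [div_eq_inv_mul]
  exact ⟨Integrable.of_integral_ne_zero (by rw [h2]; exact hS0), h2⟩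

theorem A1 : IntegrableOn (fun x : ℝ => log x / (x - 1)) (Ioo 0 1) ∧
    ∫ x in Ioo (0:ℝ) 1, log x / (x - 1) = π ^ 2 / 6 := by
  have h := series (g := fun x => - log x) (S := π ^ 2 / 6)
    (fun x hx => by have := Real.log_nonpos hx.1.le hx.2.le; linarith) mom1 ?_ (by positivity)
  · have e : (fun x : ℝ => log x / (x - 1)) = fun x => -log x / (1 - x) := by
      ext x; rw [← neg_sub x 1, neg_div_neg_eq]
    rw [e]; exact h
  · have := (hasSum_nat_add_iff' 1).2 hasSum_zeta_two
    simpa using this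

/-- The value of zeta at three. -/
noncomputable def Z : ℝ := ∑' k : ℕ, 1 / ((k : ℝ) + 1) ^ 3

theorem hasSum_Z : HasSum (fun k : ℕ => 1 / ((k : ℝ) + 1) ^ 3) Z := by
  have h : Summable (fun k : ℕ => 1 / ((k : ℝ) + 1) ^ 3) := by
    have := (summable_nat_add_iff 1).2 (Real.summable_one_div_nat_pow (p := 3).2 (by norm_num))
    simpa using this
  exact h.hasSum

theorem Z_pos : 0 < Z := hasSum_Z.summable.tsum_pos (fun k => by positivity) 0 (by simp)

theorem A2 : IntegrableOn (fun x : ℝ => log x ^ 2 / (1 - x)) (Ioo 0 1) ∧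
    ∫ x in Ioo (0:ℝ) 1, log x ^ 2 / (1 - x) = 2 * Z :=
  series (g := fun x => log x ^ 2) (fun x hx => by positivity) mom2 (hasSum_Z.mul_left 2)
    (by have := Z_pos; positivity)

theorem cov {φ φ' : ℝ → ℝ} (hd : ∀ x ∈ Ioo (0:ℝ) 1, HasDerivAt φ (φ' x) x)
    (hinj : InjOn φ (Ioo 0 1)) (him : φ '' Ioo 0 1 = Ioo 0 1) {g h : ℝ → ℝ}
    (hh : ∀ x ∈ Ioo (0:ℝ) 1, |φ' x| * g (φ x) = h x) :
    (IntegrableOn g (Ioo 0 1) ↔ IntegrableOn h (Ioo 0 1)) ∧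
    ∫ x in Ioo (0:ℝ) 1, g x = ∫ x in Ioo (0:ℝ) 1, h x := by
  have h1 := integrableOn_image_iff_integrableOn_abs_deriv_smul measurableSet_Ioo
    (fun x hx => (hd x hx).hasDerivWithinAt) hinj g
  have h2 := integral_image_eq_integral_abs_deriv_smul measurableSet_Ioo
    (fun x hx => (hd x hx).hasDerivWithinAt) hinj g
  rw [him] at h1 h2
  rw [h1, h2]
  exact ⟨integrableOn_congr_fun hh measurableSet_Ioo, setIntegral_congr_fun measurableSet_Ioo hh⟩

theorem cov_sq {g h : ℝ → ℝ} (hh : ∀ x ∈ Ioo (0:ℝ) 1, 2 * x * g (x ^ 2) = h x) :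
    (IntegrableOn g (Ioo 0 1) ↔ IntegrableOn h (Ioo 0 1)) ∧
    ∫ x in Ioo (0:ℝ) 1, g x = ∫ x in Ioo (0:ℝ) 1, h x := by
  refine cov (φ := fun x => x ^ 2) (φ' := fun x => 2 * x) (fun x _ => by
    simpa using hasDerivAt_pow 2 x) ?_ ?_ ?_
  · intro x hx y hy hxy
    exact (sq_eq_sq₀ hx.1.le hy.1.le).1 hxy
  · ext y
    constructor
    · rintro ⟨x, hx, rfl⟩
      exact ⟨pow_pos hx.1 2, pow_lt_one₀ hx.1.le hx.2 two_ne_zero⟩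
    · intro hy
      exact ⟨√y, ⟨Real.sqrt_pos.2 hy.1, by rw [Real.sqrt_lt' one_pos]; simpa using hy.2⟩,
        Real.sq_sqrt hy.1.le⟩
  · intro x hx
    rw [← hh x hx, abs_of_pos (by linarith [hx.1])]

theorem cov_refl {g h : ℝ → ℝ} (hh : ∀ x ∈ Ioo (0:ℝ) 1, g (1 - x) = h x) :
    (IntegrableOn g (Ioo 0 1) ↔ IntegrableOn h (Ioo 0 1)) ∧
    ∫ x in Ioo (0:ℝ) 1, g x = ∫ x in Ioo (0:ℝ) 1, h x := by
  refine cov (φ := fun x => 1 - x) (φ' := fun x => -1) (fun x _ => by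
    simpa using (hasDerivAt_id x).const_sub 1) ?_ ?_ ?_
  · intro x hx y hy hxy
    simp only at hxy
    linarith
  · simp
  · intro x hx
    simp [hh x hx]

theorem cov_mob {g h : ℝ → ℝ}
    (hh : ∀ x ∈ Ioo (0:ℝ) 1, 2 / (1 + x) ^ 2 * g ((1 - x) / (1 + x)) = h x) :
    (IntegrableOn g (Ioo 0 1) ↔ IntegrableOn h (Ioo 0 1)) ∧
    ∫ x in Ioo (0:ℝ) 1, g x = ∫ x in Ioo (0:ℝ) 1, h x := by
  refine cov (φ := fun x => (1 - x) / (1 + x)) (φ' := fun x => - (2 / (1 + x) ^ 2)) ?_ ?_ ?_ ?_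
  · intro x hx
    have h0 : 1 + x ≠ 0 := by linarith [hx.1]
    refine (((hasDerivAt_id x).const_sub 1).div ((hasDerivAt_id x).const_add 1) h0).congr_deriv ?_
    simp
    field_simp
    ring
  · intro x hx y hy hxy
    have h0 : 1 + x ≠ 0 := by linarith [hx.1]
    have h1 : 1 + y ≠ 0 := by linarith [hy.1]
    simp only at hxy
    rw [div_eq_div_iff h0 h1] at hxy
    linarith
  · have key : ∀ x ∈ Ioo (0:ℝ) 1, (1 - x) / (1 + x) ∈ Ioo (0:ℝ) 1 := by
      intro x hx
      have h0 : 0 < 1 + x := by linarith [hx.1]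
      exact ⟨div_pos (by linarith [hx.2]) h0, by rw [div_lt_one h0]; linarith [hx.1]⟩
    ext y
    constructor
    · rintro ⟨x, hx, rfl⟩
      exact key x hx
    · intro hy
      refine ⟨_, key y hy, ?_⟩
      have h0 : 1 + y ≠ 0 := by linarith [hy.1]
      simp only
      field_simp
      ring
  · intro x hx
    rw [← hh x hx, abs_neg, abs_of_nonneg (by positivity)]

theorem B1 : IntegrableOn (fun x : ℝ => log x / (1 + x)) (Ioo 0 1) ∧
    ∫ x in Ioo (0:ℝ) 1, log x / (1 + x) = - (π ^ 2 / 12) := by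
  obtain ⟨i, v⟩ := A1
  obtain ⟨i2, v2⟩ := cov_sq (g := fun x : ℝ => log x / (x - 1))
    (h := fun x => 2 * (log x / (x - 1) + log x / (1 + x))) (by
      intro x hx
      have h0 : 1 + x ≠ 0 := by linarith [hx.1]
      have h1 : x - 1 ≠ 0 := by linarith [hx.2]
      have h2 : x ^ 2 - 1 ≠ 0 := by
        rw [show x ^ 2 - 1 = (x - 1) * (1 + x) by ring]; positivity
      simp only [Real.log_pow]
      rw [show x ^ 2 - 1 = (x - 1) * (1 + x) by ring]
      push_cast
      field_simp
      ring)
  have i3 := i2.1 i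
  have e : (fun x : ℝ => log x / (1 + x)) =
      fun x => (1/2) * (2 * (log x / (x - 1) + log x / (1 + x))) - log x / (x - 1) := by
    ext x; ring
  rw [e]
  refine ⟨(i3.const_mul _).sub i, ?_⟩
  rw [integral_sub (i3.const_mul _) i, integral_const_mul, ← v2, v]
  ring

theorem B2 : IntegrableOn (fun x : ℝ => log x ^ 2 / (1 + x)) (Ioo 0 1) ∧
    ∫ x in Ioo (0:ℝ) 1, log x ^ 2 / (1 + x) = 3 / 2 * Z := by
  obtain ⟨i, v⟩ := A2
  obtain ⟨i2, v2⟩ := cov_sq (g := fun x : ℝ => log x ^ 2 / (1 - x))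
    (h := fun x => 4 * (log x ^ 2 / (1 - x) - log x ^ 2 / (1 + x))) (by
      intro x hx
      have h0 : 1 + x ≠ 0 := by linarith [hx.1]
      have h1 : 1 - x ≠ 0 := by linarith [hx.2]
      simp only [Real.log_pow]
      rw [show 1 - x ^ 2 = (1 - x) * (1 + x) by ring]
      push_cast
      field_simp
      ring)
  have i3 := i2.1 i
  have e : (fun x : ℝ => log x ^ 2 / (1 + x)) =
      fun x => log x ^ 2 / (1 - x) - (1/4) * (4 * (log x ^ 2 / (1 - x) - log x ^ 2 / (1 + x))) := by
    ext x; ring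
  rw [e]
  refine ⟨i.sub (i3.const_mul _), ?_⟩
  rw [integral_sub i (i3.const_mul _), integral_const_mul, ← v2, v]
  ring

theorem P : IntegrableOn (fun x : ℝ => log (1 + x) ^ 2 / x) (Ioo 0 1) ∧
    ∫ x in Ioo (0:ℝ) 1, log (1 + x) ^ 2 / x = Z / 4 := by
  obtain ⟨i, v⟩ := A2
  obtain ⟨ib, vb⟩ := B2
  obtain ⟨i1, v1⟩ := cov_refl (g := fun x : ℝ => log x ^ 2 / (1 - x))
    (h := fun x => log (1 - x) ^ 2 / x) (by intro x hx; simp)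
  replace i1 := i1.1 i
  obtain ⟨i2, v2⟩ := cov_sq (g := fun x : ℝ => log (1 - x) ^ 2 / x)
    (h := fun x => 2 * ((log (1 - x) + log (1 + x)) ^ 2 / x)) (by
      intro x hx
      have h0 : 1 + x ≠ 0 := by linarith [hx.1]
      have h1 : 1 - x ≠ 0 := by linarith [hx.2]
      have h2 : x ≠ 0 := hx.1.ne'
      rw [show 1 - x ^ 2 = (1 - x) * (1 + x) by ring, Real.log_mul h1 h0]
      field_simp)
  replace i2 := i2.1 i1
  obtain ⟨i3, v3⟩ := cov_mob (g := fun x : ℝ => (log (1 - x) - log (1 + x)) ^ 2 / x)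
    (h := fun x => log x ^ 2 / (1 - x) + log x ^ 2 / (1 + x)) (by
      intro x hx
      have h0 : 1 + x ≠ 0 := by linarith [hx.1]
      have h1 : 1 - x ≠ 0 := by linarith [hx.2]
      have h2 : x ≠ 0 := hx.1.ne'
      rw [show 1 - (1 - x) / (1 + x) = 2 * x / (1 + x) by field_simp; ring,
        show 1 + (1 - x) / (1 + x) = 2 / (1 + x) by field_simp; ring,
        Real.log_div (by positivity) h0, Real.log_div two_ne_zero h0,
        Real.log_mul two_ne_zero h2]
      field_simp
      ring)
  replace i3 := i3.2 (i.add ib)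
  rw [integral_add i ib] at v3
  rw [integral_const_mul] at v2
  have i2' : IntegrableOn (fun x : ℝ => (log (1 - x) + log (1 + x)) ^ 2 / x) (Ioo 0 1) := by
    have := i2.const_mul (1/2)
    simp at this
    exact this
  have e : (fun x : ℝ => log (1 + x) ^ 2 / x) =
      fun x => (1/2) * ((log (1 - x) + log (1 + x)) ^ 2 / x + (log (1 - x) - log (1 + x)) ^ 2 / x)
        - log (1 - x) ^ 2 / x := by
    ext x; ring
  rw [e]
  have i4 : IntegrableOn (fun x : ℝ => (1/2) * ((log (1 - x) + log (1 + x)) ^ 2 / x +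
      (log (1 - x) - log (1 + x)) ^ 2 / x)) (Ioo 0 1) := (i2'.add i3).const_mul _
  refine ⟨i4.sub i1, ?_⟩
  rw [integral_sub i4 i1, integral_const_mul, integral_add i2' i3]
  linarith

theorem log1p_div_le {s : ℝ} (hs : 0 < s) : 0 ≤ log (1 + s) / s ∧ log (1 + s) / s ≤ 1 := by
  refine ⟨div_nonneg (Real.log_nonneg (by linarith)) hs.le, ?_⟩
  rw [div_le_one hs]
  have := Real.log_le_sub_one_of_pos (show 0 < 1 + s by linarith)
  linarith

theorem meas_l : Measurable (fun s : ℝ => log (1 + s) / s) := by fun_prop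

theorem int_l {t : ℝ} (ht : 0 ≤ t) : IntervalIntegrable (fun s : ℝ => log (1 + s) / s) volume 0 t := by
  refine (intervalIntegrable_const (c := (1:ℝ))).mono_fun' meas_l.aestronglyMeasurable ?_
  rw [uIoc_of_le ht]
  refine (ae_restrict_mem measurableSet_Ioc).mono fun s hs => ?_
  have := log1p_div_le hs.1
  beta_reduce
  rw [Real.norm_of_nonneg this.1]
  exact this.2

/-- The function `-Li₂(-t)`. -/
noncomputable def Lf (t : ℝ) : ℝ := ∫ s in (0:ℝ)..t, log (1 + s) / s

theorem Lf_bound {t : ℝ} (ht : 0 ≤ t) : |Lf t| ≤ t := by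
  have := intervalIntegral.norm_integral_le_of_norm_le_const (a := 0) (b := t) (C := 1)
    (f := fun s : ℝ => log (1 + s) / s) (by
      rw [uIoc_of_le ht]
      intro s hs
      have := log1p_div_le hs.1
      rw [Real.norm_of_nonneg this.1]
      exact this.2)
  rw [sub_zero, abs_of_nonneg ht, one_mul, Real.norm_eq_abs] at this
  exact this

theorem Lf_deriv {t : ℝ} (ht : 0 < t) : HasDerivAt Lf (log (1 + t) / t) t := by
  refine intervalIntegral.integral_hasDerivAt_right (int_l ht.le)
    meas_l.stronglyMeasurable.stronglyMeasurableAtFilter ?_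
  exact ContinuousAt.div (ContinuousAt.log (by fun_prop) (by linarith)) (by fun_prop) ht.ne'

theorem tends_log1p : Tendsto (fun x : ℝ => x * log x) (𝓝[>] 0) (𝓝 0) := by
  have := (Real.continuous_mul_log.tendsto 0).mono_left (nhdsWithin_le_nhds (s := Ioi 0))
  simpa using this

theorem tends_logsq : Tendsto (fun x : ℝ => x * log x ^ 2) (𝓝[>] 0) (𝓝 0) := by
  have := (cont_log_sq 0 (by simp)).mono_left (nhdsWithin_mono _ Ioi_subset_Ici_self)
  simpa using this

theorem log_intOn : IntegrableOn log (Ioo 0 1) :=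
  (intervalIntegrable_iff_integrableOn_Ioo_of_le zero_le_one).1 intervalIntegral.intervalIntegrable_log'

theorem squeeze0 {f g : ℝ → ℝ} (hg : Tendsto g (𝓝[>] 0) (𝓝 0)) (h : ∀ x ∈ Ioo (0:ℝ) 1, |f x| ≤ |g x|) :
    Tendsto f (𝓝[>] 0) (𝓝 0) := by
  have hg' : Tendsto (fun x => |g x|) (𝓝[>] 0) (𝓝 0) := by simpa using hg.abs
  refine squeeze_zero_norm' ?_ hg'
  filter_upwards [Ioo_mem_nhdsGT (zero_lt_one (α := ℝ))] with x hx using h x hx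

theorem abs_log1p {x : ℝ} (hx : 0 ≤ x) : |log (1 + x)| ≤ x := by
  rw [abs_of_nonneg (Real.log_nonneg (by linarith))]
  have := Real.log_le_sub_one_of_pos (show 0 < 1 + x by linarith)
  linarith

theorem inner_x {t : ℝ} (ht : 0 < t) (ht1 : t ≤ 1) :
    ∫ x in Ioo (0:ℝ) 1, -log x / (1 + x * t) = Lf t / t := by
  have hi : IntegrableOn (fun x => -log x / (1 + x * t)) (Ioo 0 1) := by
    refine Integrable.mono' log_intOn.norm (Measurable.aestronglyMeasurable (by fun_prop)) ?_
    refine (ae_restrict_mem measurableSet_Ioo).mono fun x hx => ?_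
    have : 0 ≤ x * t := mul_nonneg hx.1.le ht.le
    rw [norm_div, norm_neg, Real.norm_of_nonneg (show 0 ≤ 1 + x * t by linarith)]
    exact div_le_self (norm_nonneg _) (by linarith)
  have h := ftc (f := fun x => -(log x * log (1 + x * t)) / t + Lf (x * t) / t)
    (f' := fun x => -log x / (1 + x * t)) (a := 0) (b := Lf t / t) ?_ hi ?_ ?_
  · rw [h, sub_zero]
  · intro x hx
    have hx0 := hx.1
    have h0 : 0 < x * t := mul_pos hx.1 ht
    have hlin : HasDerivAt (fun x : ℝ => x * t) t x := by simpa using (hasDerivAt_id x).mul_const t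
    have h1 := (Real.hasDerivAt_log hx.1.ne').mul ((hlin.const_add 1).log (by linarith))
    have h2 := HasDerivAt.comp x (Lf_deriv h0) hlin
    refine ((h1.neg.div_const t).add (h2.div_const t)).congr_deriv ?_
    have : 1 + x * t ≠ 0 := by linarith
    field_simp
    ring
  · refine squeeze0 (g := fun x => |x * log x| + |x|) ?_ ?_
    · have h2 : Tendsto (fun x : ℝ => |x|) (𝓝[>] 0) (𝓝 0) := by
        have := (continuous_abs.tendsto (0:ℝ)).mono_left (nhdsWithin_le_nhds (s := Ioi (0:ℝ)))
        simpa using this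
      simpa using tends_log1p.abs.add h2
    · intro x hx
      have h0 : 0 < x * t := mul_pos hx.1 ht
      have h1 := abs_log1p h0.le
      have h2 := Lf_bound h0.le
      rw [abs_of_nonneg (show 0 ≤ |x * log x| + |x| by positivity)]
      refine (abs_add_le _ _).trans (add_le_add ?_ ?_)
      · rw [abs_div, abs_neg, abs_mul, abs_mul, abs_of_pos ht, div_le_iff₀ ht, abs_of_pos hx.1]
        calc _ ≤ |log x| * (x * t) := by gcongr
          _ = _ := by ring
      · rw [abs_div, abs_of_pos ht, div_le_iff₀ ht, abs_of_pos hx.1]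
        exact h2
  · have : ContinuousAt (fun x => -(log x * log (1 + x * t)) / t + Lf (x * t) / t) 1 := by
      have hL : ContinuousAt (fun x => Lf (x * t)) 1 :=
        ContinuousAt.comp (x := (1:ℝ)) (g := Lf) (f := fun x : ℝ => x * t)
          (by simpa using (Lf_deriv ht).continuousAt) (by fun_prop)
      have h1 : ContinuousAt (fun x : ℝ => log (1 + x * t)) 1 :=
        ContinuousAt.log (by fun_prop) (by linarith)
      have h2 : ContinuousAt (fun x : ℝ => log x) 1 := Real.continuousAt_log one_ne_zero
      exact ((h2.mul h1).neg.div_const t).add (hL.div_const t)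
    simpa [ContinuousAt] using this.tendsto.mono_left (nhdsWithin_le_nhds (s := Iio 1))

theorem Lf_one : Lf 1 = π ^ 2 / 12 := by
  have h := inner_x one_pos le_rfl
  have h2 := B1.2
  simp only [mul_one, div_one, neg_div, integral_neg] at h
  rw [← h, h2]; ring

theorem Lf_meas : AEStronglyMeasurable Lf (volume.restrict (Ioo 0 1)) :=
  ContinuousOn.aestronglyMeasurable
    (fun t ht => (Lf_deriv ht.1).continuousAt.continuousWithinAt) measurableSet_Ioo

theorem int_K : IntegrableOn (fun t => Lf t / t / (1 + t)) (Ioo 0 1) := by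
  have h1 : IntegrableOn (fun _ => (1:ℝ)) (Ioo (0:ℝ) 1) := by simp
  refine Integrable.mono' h1 ?_ ?_
  · have hm : AEStronglyMeasurable (fun t : ℝ => t⁻¹ * (1 + t)⁻¹) (volume.restrict (Ioo 0 1)) :=
      Measurable.aestronglyMeasurable (by fun_prop)
    refine (Lf_meas.mul hm).congr (Eventually.of_forall fun t => ?_)
    simp [div_eq_mul_inv, mul_assoc]
  · refine (ae_restrict_mem measurableSet_Ioo).mono fun t ht => ?_
    have h1 := Lf_bound ht.1.le
    have h0 := ht.1
    rw [norm_div, norm_div, Real.norm_of_nonneg h0.le, Real.norm_of_nonneg (by linarith : 0 ≤ 1 + t),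
      div_div, div_le_one (by positivity), Real.norm_eq_abs]
    nlinarith

theorem K_val : ∫ t in Ioo (0:ℝ) 1, Lf t / t / (1 + t) = Z - log 2 * (π ^ 2 / 12) := by
  obtain ⟨ib, vb⟩ := B2
  obtain ⟨ip, vp⟩ := P
  have ib' : IntegrableOn (fun x : ℝ => (1/2) * (log x ^ 2 / (1 + x))) (Ioo 0 1) := ib.const_mul _
  have hi2 : IntegrableOn (fun t : ℝ => Lf t / t / (1 + t) - (1/2) * (log t ^ 2 / (1 + t)))
      (Ioo 0 1) := int_K.sub ib'
  have hi : IntegrableOn (fun t : ℝ => Lf t / t / (1 + t) - (1/2) * (log t ^ 2 / (1 + t))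
      - log (1 + t) ^ 2 / t) (Ioo 0 1) := hi2.sub ip
  have h := ftc (f := fun t => Lf t * log t - (1/2) * (log t ^ 2 * log (1 + t)) - Lf t * log (1 + t))
    (a := 0) (b := - (Lf 1 * log 2)) ?_ hi ?_ ?_
  · rw [integral_sub hi2 ip, integral_sub int_K ib', integral_const_mul, vb, vp, Lf_one] at h
    linarith
  · intro t ht
    have h0 := ht.1
    have hl := Real.hasDerivAt_log h0.ne'
    have hl1 : HasDerivAt (fun t : ℝ => log (1 + t)) (1 / (1 + t)) t :=
      ((hasDerivAt_id t).const_add 1).log (by simp only [id]; linarith)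
    have hL := Lf_deriv h0
    refine (((hL.mul hl).sub (((hl.pow 2).mul hl1).const_mul (1/2))).sub
      (hL.mul hl1)).congr_deriv ?_
    have : 1 + t ≠ 0 := by linarith
    simp
    field_simp
    ring
  · have e1 : Tendsto (fun t => Lf t * log t) (𝓝[>] 0) (𝓝 0) := by
      refine squeeze0 tends_log1p fun x hx => ?_
      rw [abs_mul, abs_mul, abs_of_pos hx.1]
      have := Lf_bound hx.1.le
      gcongr
    have e2 : Tendsto (fun t => log t ^ 2 * log (1 + t)) (𝓝[>] 0) (𝓝 0) := by
      refine squeeze0 tends_logsq fun x hx => ?_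
      rw [abs_mul, abs_mul, abs_of_pos hx.1, mul_comm]
      have := abs_log1p hx.1.le
      gcongr
    have e3 : Tendsto (fun t => Lf t * log (1 + t)) (𝓝[>] 0) (𝓝 0) := by
      refine squeeze0 (g := fun x => x) (tendsto_id.mono_left nhdsWithin_le_nhds) fun x hx => ?_
      rw [abs_mul, abs_of_pos hx.1]
      have h1 := abs_log1p hx.1.le
      have h2 := Lf_bound hx.1.le
      have h3 := abs_nonneg (Lf x)
      nlinarith [hx.1, hx.2, mul_le_mul h2 h1 (abs_nonneg _) hx.1.le]
    have e4 := (e1.sub (e2.const_mul (1/2))).sub e3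
    rw [show (0:ℝ) - 1 / 2 * 0 - 0 = 0 by norm_num] at e4
    exact e4
  · have : ContinuousAt (fun t => Lf t * log t - (1/2) * (log t ^ 2 * log (1 + t)) - Lf t * log (1 + t)) 1 := by
      have hL := (Lf_deriv one_pos).continuousAt
      have h1 : ContinuousAt (fun x : ℝ => log (1 + x)) 1 :=
        ContinuousAt.log (by fun_prop) (by norm_num)
      have h2 : ContinuousAt (fun x : ℝ => log x) 1 := Real.continuousAt_log one_ne_zero
      exact ((hL.mul h2).sub (((h2.pow 2).mul h1).const_mul (1/2))).sub (hL.mul h1)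
    have h3 := this.tendsto.mono_left (nhdsWithin_le_nhds (s := Iio 1))
    rw [show Lf 1 * log 1 - (1/2) * (log 1 ^ 2 * log (1 + 1)) - Lf 1 * log (1 + 1) = -(Lf 1 * log 2) by
      rw [Real.log_one, one_add_one_eq_two]; ring] at h3
    exact h3

theorem inner_t {x : ℝ} (hx : x ∈ Ioo (0:ℝ) 1) :
    ∫ t in Ioo (0:ℝ) 1, -log x / (1 + x * t) / (1 + t) =
      log x / (x - 1) * (log 2 - log (1 + x)) := by
  have hx0 := hx.1
  have hx1 := hx.2
  have h := (ftc_c (f := fun t => log x / (x - 1) * (log (1 + t) - log (1 + x * t)))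
    (f' := fun t => -log x / (1 + x * t) / (1 + t)) ?_ ?_ ?_).2
  · rw [h]; simp [one_add_one_eq_two]
  · refine ContinuousOn.mul continuousOn_const (ContinuousOn.sub ?_ ?_)
    · exact ContinuousOn.log (by fun_prop) fun t ht => by linarith [ht.1]
    · exact ContinuousOn.log (by fun_prop) fun t ht => by nlinarith [ht.1]
  · intro t ht
    have h0 := ht.1
    have h1 : 0 < 1 + x * t := by positivity
    have h2 : 1 + t ≠ 0 := by linarith
    have hx2 : x - 1 ≠ 0 := by linarith
    have hl1 : HasDerivAt (fun t : ℝ => log (1 + t)) (1 / (1 + t)) t :=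
      ((hasDerivAt_id t).const_add 1).log h2
    have hlin : HasDerivAt (fun t : ℝ => x * t) x t := by simpa using (hasDerivAt_id t).const_mul x
    refine ((hl1.sub ((hlin.const_add 1).log h1.ne')).const_mul _).congr_deriv ?_
    field_simp
    ring
  · intro t ht
    have h0 := ht.1
    have := Real.log_nonpos hx.1.le hx.2.le
    refine div_nonneg (div_nonneg (by linarith) (by positivity)) (by positivity)

theorem K_swap : ∫ x in Ioo (0:ℝ) 1, log x / (x - 1) * (log 2 - log (1 + x)) =
    ∫ t in Ioo (0:ℝ) 1, Lf t / t / (1 + t) := by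
  have e1 : ∫ x in Ioo (0:ℝ) 1, log x / (x - 1) * (log 2 - log (1 + x)) =
      ∫ x in Ioo (0:ℝ) 1, ∫ t in Ioo (0:ℝ) 1, -log x / (1 + x * t) / (1 + t) :=
    setIntegral_congr_fun measurableSet_Ioo fun x hx => (inner_t hx).symm
  have e2 : ∫ t in Ioo (0:ℝ) 1, Lf t / t / (1 + t) =
      ∫ t in Ioo (0:ℝ) 1, ∫ x in Ioo (0:ℝ) 1, -log x / (1 + x * t) / (1 + t) :=
    setIntegral_congr_fun measurableSet_Ioo fun t ht => by
      simp only [integral_div]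
      rw [inner_x ht.1 ht.2.le]
  rw [e1, e2]
  refine integral_integral_swap ?_
  have h1 : IntegrableOn (fun _ => (1:ℝ)) (Ioo (0:ℝ) 1) := by simp
  refine Integrable.mono' (Integrable.mul_prod log_intOn.norm h1)
    (Measurable.aestronglyMeasurable (by simp only [Function.uncurry_def]; fun_prop)) ?_
  rw [Measure.prod_restrict]
  refine (ae_restrict_mem (measurableSet_Ioo.prod measurableSet_Ioo)).mono fun z hz => ?_
  have h0 := hz.1.1
  have h2 := hz.2.1
  have h3 : 0 < z.1 * z.2 := mul_pos h0 h2
  simp only [Function.uncurry_def, mul_one]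
  rw [norm_div, norm_div, norm_neg, Real.norm_of_nonneg (by linarith : 0 ≤ 1 + z.1 * z.2),
    Real.norm_of_nonneg (by linarith : 0 ≤ 1 + z.2), div_div]
  refine div_le_self (norm_nonneg _) ?_
  nlinarith [mul_pos h3 h2]

end DilogAux

open DilogAux in
/-- `∫₀¹ (x/(1+x))·(∫₀ˣ log(y)/(y−1) dy) dx = (log(2)·π²/6 − 2ζ(3) + 2)/2`. -/
theorem integral_dilog_kernel_one :
    ∫ x in (0:ℝ)..1, (x / (1 + x)) * (∫ y in (0:ℝ)..x, Real.log y / (y - 1)) =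
      (Real.log 2 * (π ^ 2 / 6) - 2 * (∑' k : ℕ, 1 / ((k : ℝ) + 1) ^ 3) + 2) / 2 := by
  have hZ : (∑' k : ℕ, 1 / ((k : ℝ) + 1) ^ 3) = Z := rfl
  rw [hZ, intervalIntegral.integral_of_le zero_le_one, integral_Ioc_eq_integral_Ioo]
  have hf01 : IntervalIntegrable (fun y : ℝ => Real.log y / (y - 1)) volume 0 1 :=
    (intervalIntegrable_iff_integrableOn_Ioo_of_le zero_le_one).2 A1.1
  set F : ℝ → ℝ := fun x => ∫ y in (0:ℝ)..x, Real.log y / (y - 1) with hF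
  have hFc : ContinuousOn F (Set.Icc 0 1) := by
    have := intervalIntegral.continuousOn_primitive_interval' hf01 (a := 0) (by simp)
    rwa [Set.uIcc_of_le zero_le_one] at this
  have hFd : ∀ x ∈ Set.Ioo (0:ℝ) 1, HasDerivAt F (Real.log x / (x - 1)) x := by
    intro x hx
    have hm : Measurable (fun y : ℝ => Real.log y / (y - 1)) := by fun_prop
    refine intervalIntegral.integral_hasDerivAt_right (hf01.mono_set ?_)
      hm.stronglyMeasurable.stronglyMeasurableAtFilter ?_
    · rw [Set.uIcc_of_le zero_le_one, Set.uIcc_of_le hx.1.le]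
      exact Set.Icc_subset_Icc_right hx.2.le
    · exact ContinuousAt.div (Real.continuousAt_log hx.1.ne') (by fun_prop) (by linarith [hx.2])
  have iG : IntegrableOn (fun x : ℝ => x / (1 + x) * F x) (Set.Ioo 0 1) := by
    have : ContinuousOn (fun x : ℝ => x / (1 + x) * F x) (Set.Icc 0 1) := by
      refine ContinuousOn.mul (ContinuousOn.div (by fun_prop) (by fun_prop) ?_) hFc
      intro x hx; linarith [hx.1]
    exact (this.integrableOn_Icc).mono_set Set.Ioo_subset_Icc_self
  have iK : IntegrableOn (fun x : ℝ => Real.log x / (x - 1) * (Real.log 2 - Real.log (1 + x)))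
      (Set.Ioo 0 1) := by
    have h := A1.1.norm.const_mul (Real.log 2)
    refine Integrable.mono' h (Measurable.aestronglyMeasurable (by fun_prop)) ?_
    refine (ae_restrict_mem measurableSet_Ioo).mono fun x hx => ?_
    have h1 : 0 ≤ Real.log (1 + x) := Real.log_nonneg (by linarith [hx.1])
    have h2 : Real.log (1 + x) ≤ Real.log 2 :=
      Real.log_le_log (by linarith [hx.1]) (by linarith [hx.2])
    rw [norm_mul, mul_comm, Real.norm_of_nonneg (by linarith : 0 ≤ Real.log 2 - Real.log (1 + x))]
    gcongr
    linarith
  have hi : IntegrableOn (fun x : ℝ => x / (1 + x) * F x + Real.log x +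
      Real.log x / (x - 1) * (Real.log 2 - Real.log (1 + x))) (Set.Ioo 0 1) :=
    (iG.add log_intOn).add iK
  have hl : ∫ x in Set.Ioo (0:ℝ) 1, Real.log x = -1 := by
    have := (mom1 0).2
    simp [integral_neg] at this
    linarith
  have hcont : ContinuousOn (fun x => F x * (x - 1 - Real.log (1 + x) + Real.log 2))
      (Set.Icc 0 1) := by
    refine hFc.mul (ContinuousOn.add (ContinuousOn.sub (by fun_prop) ?_) continuousOn_const)
    exact ContinuousOn.log (by fun_prop) fun t ht => by linarith [ht.1]
  have h := ftc (f := fun x => F x * (x - 1 - Real.log (1 + x) + Real.log 2)) (a := 0) (b := 0)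
    ?_ hi ?_ ?_
  · have hi2 : IntegrableOn (fun x : ℝ => x / (1 + x) * F x + Real.log x) (Set.Ioo 0 1) :=
      iG.add log_intOn
    rw [integral_add hi2 iK, integral_add iG log_intOn, K_swap, K_val, hl] at h
    linarith
  · intro x hx
    have h0 := hx.1
    have h2 : 1 + x ≠ 0 := by linarith
    have h3 : x - 1 ≠ 0 := by linarith [hx.2]
    have hl1 : HasDerivAt (fun t : ℝ => Real.log (1 + t)) (1 / (1 + x)) x :=
      ((hasDerivAt_id x).const_add 1).log h2
    refine ((hFd x hx).mul ((((hasDerivAt_id x).sub_const 1).sub hl1).add_const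
      (Real.log 2))).congr_deriv ?_
    simp
    field_simp
    ring
  · have := (hcont 0 (by simp)).mono_left (show nhdsWithin (0:ℝ) (Set.Ioi 0) ≤ _ by
      rw [← nhdsWithin_Ioo_eq_nhdsGT (zero_lt_one (α := ℝ))]
      exact nhdsWithin_mono _ Set.Ioo_subset_Icc_self)
    simpa [hF] using this
  · have := (hcont 1 (by simp)).mono_left (show nhdsWithin (1:ℝ) (Set.Iio 1) ≤ _ by
      rw [← nhdsWithin_Ioo_eq_nhdsLT (zero_lt_one (α := ℝ))]
      exact nhdsWithin_mono _ Set.Ioo_subset_Icc_self)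
    simpa [one_add_one_eq_two] using this
end
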